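/- arXiv:2208.13223 — 6 statements merged into one kernel-verified Lean document; each statement's English description precedes it below -/
import Mathlib

section
/- Every eigenvalue of the perturbed Laplacian L_B = L + diag(δ) has strictly positive real part; moreover, the eigenvalue λ₁(L_B) of L_B with smallest real part is a simple real eigenvalue, and a corresponding eigenvector can be chosen to be entrywise positive. -/
open Matrix Polynomial

/-- The weighted digraph of `W` is strongly connected: every node is connected to every
other node by a directed path along entries with `W a b > 0` (an edge `(a, b)` means that
`b` is an in-neighbor of `a`). -/
def StronglyConnected {n : ℕ} (W : Matrix (Fin n) (Fin n) ℝ) : Prop :=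
  ∀ i j : Fin n, Relation.ReflTransGen (fun a b => 0 < W a b) i j

/-- The in-degree matrix `D = diag(d₁, …, d_n)` with `d_i = ∑ j, w_ij`. -/
def degMat {n : ℕ} (W : Matrix (Fin n) (Fin n) ℝ) : Matrix (Fin n) (Fin n) ℝ :=
  Matrix.diagonal fun i => ∑ j, W i j

/-- The perturbed Laplacian `L_B = (D - W) + diag(δ)`. -/
def lapB {n : ℕ} (W : Matrix (Fin n) (Fin n) ℝ) (δ : Fin n → ℝ) :
    Matrix (Fin n) (Fin n) ℝ :=
  degMat W - W + Matrix.diagonal δ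

/-- `μ : ℂ` is an eigenvalue of the real matrix `M`, i.e. a root of its
characteristic polynomial over `ℂ`. -/
def IsEigenvalue {n : ℕ} (M : Matrix (Fin n) (Fin n) ℝ) (μ : ℂ) : Prop :=
  ((M.map (algebraMap ℝ ℂ)).charpoly).IsRoot μ

/-!
Everything rests on a maximum principle for an irreducible matrix `M` with nonpositive off-diagonal
entries: if `0 ≤ x`, `0 ≤ M x` and `x` vanishes somewhere, then `x = 0`. Maximize `c` subject to
`c x ≤ B x` with `0 ≤ x ≠ 0`. The maximizer is an eigenvector: otherwise the principle makes
`B - c` invertible, with `z = (B - c)⁻¹ x` positive, and `B z = c z + x` shows that `z` allows a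
larger `c`. Applied to `Bᵀ`, the same gives a positive left eigenvector `u`, and pairing with `u`
yields the rest: `B x = μ x` implies `B |x| ≤ (re μ) |x|`, so `c ≤ re μ`; `u` annihilates the range
of `B - c` but not its kernel, so there are no longer Jordan chains; and for `B = L_B` one has
`c ⟨u, 1⟩ = ⟨u, L_B 1⟩ = ⟨u, δ⟩ > 0`.
-/

section CommRing

variable {ι R : Type*} [Fintype ι] [CommRing R]

lemma sub_smul_one_mulVec [DecidableEq ι] (A : Matrix ι ι R) (c : R) (x : ι → R) :
    (A - c • 1) *ᵥ x = A *ᵥ x - c • x := by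
  rw [sub_mulVec, smul_mulVec, one_mulVec]

lemma dotProduct_mulVec_of_vecMul_eq_smul {A : Matrix ι ι R} {c : R} {u : ι → R}
    (hu : u ᵥ* A = c • u) (x : ι → R) : u ⬝ᵥ A *ᵥ x = c * (u ⬝ᵥ x) := by
  rw [dotProduct_mulVec, hu, smul_dotProduct, smul_eq_mul]

end CommRing

lemma exists_smul_le_and_apply_eq {ι K : Type*} [Finite ι] [Nonempty ι] [Field K] [LinearOrder K]
    [IsStrictOrderedRing K] {v : ι → K} (hv : ∀ i, 0 < v i) (w : ι → K) :
    ∃ t : K, t • v ≤ w ∧ ∃ i, w i = t * v i := by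
  obtain ⟨i, hi⟩ := Finite.exists_min fun i ↦ w i / v i
  exact ⟨w i / v i, fun j ↦ (le_div_iff₀ (hv j)).1 (hi j), i, (div_mul_cancel₀ _ (hv i).ne').symm⟩

section OrderedRing

variable {ι R : Type*} [Fintype ι] [CommRing R] [LinearOrder R] [IsStrictOrderedRing R]

lemma dotProduct_pos_of_pos_of_nonneg_of_ne_zero {u x : ι → R} (hu : ∀ i, 0 < u i) (hx : 0 ≤ x)
    (hx₀ : x ≠ 0) : 0 < u ⬝ᵥ x := by
  obtain ⟨j, hj⟩ := Function.ne_iff.1 hx₀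
  exact Finset.sum_pos' (fun i _ ↦ mul_nonneg (hu i).le (hx i))
    ⟨j, Finset.mem_univ j, mul_pos (hu j) ((hx j).lt_of_ne' hj)⟩

lemma pos_of_vecMul_eq_smul_of_mulVec_nonneg {B : Matrix ι ι R} {c : R} {u x : ι → R}
    (hu : ∀ i, 0 < u i) (huB : u ᵥ* B = c • u) (hx : 0 ≤ x) (hBx : 0 ≤ B *ᵥ x)
    (hBx₀ : B *ᵥ x ≠ 0) : 0 < c := by
  have h : 0 < c * (u ⬝ᵥ x) := calc
    0 < u ⬝ᵥ B *ᵥ x := dotProduct_pos_of_pos_of_nonneg_of_ne_zero hu hBx hBx₀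
    _ = c * (u ⬝ᵥ x) := dotProduct_mulVec_of_vecMul_eq_smul huB x
  exact pos_of_mul_pos_left h (dotProduct_nonneg_of_nonneg (fun i ↦ (hu i).le) hx)

end OrderedRing

/-- A Z-matrix (off-diagonal entries nonpositive) that is irreducible: the digraph of its nonzero
off-diagonal entries is strongly connected. The diagonal is unconstrained, so that the notion is
stable under shifts `B - c • 1`; in particular every `1 × 1` matrix qualifies. -/
structure IsIrreducibleZMatrix {ι R : Type*} [Zero R] [Preorder R] (B : Matrix ι ι R) : Prop where
  nonpos_of_ne {i j : ι} (hij : i ≠ j) : B i j ≤ 0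
  connected (i j : ι) : Relation.ReflTransGen (fun a b ↦ a ≠ b ∧ B a b < 0) i j

namespace IsIrreducibleZMatrix

section OrderedRing

variable {ι R : Type*} [CommRing R] [LinearOrder R] {M : Matrix ι ι R}

lemma transpose (hM : IsIrreducibleZMatrix M) : IsIrreducibleZMatrix Mᵀ where
  nonpos_of_ne hij := hM.nonpos_of_ne hij.symm
  connected i j := .mono (fun _ _ h ↦ ⟨h.1.symm, h.2⟩) _ _ (hM.connected j i).swap

lemma sub_smul_one [DecidableEq ι] (hM : IsIrreducibleZMatrix M) (c : R) :
    IsIrreducibleZMatrix (M - c • 1) where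
  nonpos_of_ne hij := by simpa [one_apply_ne hij] using hM.nonpos_of_ne hij
  connected i j := .mono (fun _ _ h ↦ ⟨h.1, by simpa [one_apply_ne h.1] using h.2⟩) _ _
    (hM.connected i j)

variable [IsStrictOrderedRing R] [Fintype ι]

theorem eq_zero_of_apply_eq_zero (hM : IsIrreducibleZMatrix M) {x : ι → R} (hx : 0 ≤ x)
    (hMx : 0 ≤ M *ᵥ x) {i : ι} (hi : x i = 0) : x = 0 := by
  ext j
  induction hM.connected i j with
  | refl => exact hi
  | @tail a b _ hab ha =>
    have hterm : ∀ k ∈ Finset.univ, M a k * x k ≤ 0 := fun k _ ↦ by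
      obtain rfl | hak := eq_or_ne a k
      · simp [ha]
      · exact mul_nonpos_of_nonpos_of_nonneg (hM.nonpos_of_ne hak) (hx k)
    have hsum : ∑ k, M a k * x k = 0 := (Finset.sum_nonpos hterm).antisymm (hMx a)
    exact (mul_eq_zero.1 ((Finset.sum_eq_zero_iff_of_nonpos hterm).1 hsum b
      (Finset.mem_univ b))).resolve_left hab.2.ne

lemma pos_of_mulVec_nonneg (hM : IsIrreducibleZMatrix M) {x : ι → R} (hx : 0 ≤ x)
    (hMx : 0 ≤ M *ᵥ x) (hx₀ : x ≠ 0) (i : ι) : 0 < x i :=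
  (hx i).lt_of_ne' fun hi ↦ hx₀ (hM.eq_zero_of_apply_eq_zero hx hMx hi)

end OrderedRing

variable {ι K : Type*} [Fintype ι] [Field K] [LinearOrder K] [IsStrictOrderedRing K]
  {M : Matrix ι ι K}

lemma exists_eq_smul_of_mulVec_eq_zero [Nonempty ι] (hM : IsIrreducibleZMatrix M) {v w : ι → K}
    (hv : ∀ i, 0 < v i) (hMv : M *ᵥ v = 0) (hMw : M *ᵥ w = 0) : ∃ t : K, w = t • v := by
  obtain ⟨t, hle, i, hi⟩ := exists_smul_le_and_apply_eq hv w
  refine ⟨t, sub_eq_zero.1 (hM.eq_zero_of_apply_eq_zero (sub_nonneg.2 hle) ?_ (i := i) ?_)⟩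
  · simp [mulVec_sub, mulVec_smul, hMv, hMw]
  · simp [hi]

lemma nonneg_of_mulVec_nonneg (hM : IsIrreducibleZMatrix M) {x w : ι → K} (hx : ∀ i, 0 < x i)
    (hMx : 0 ≤ M *ᵥ x) (hMx₀ : M *ᵥ x ≠ 0) (hMw : 0 ≤ M *ᵥ w) : 0 ≤ w := by
  have : Nonempty ι := (Function.ne_iff.1 hMx₀).nonempty
  obtain ⟨t, hle, i, hi⟩ := exists_smul_le_and_apply_eq hx w
  obtain ht | ht := le_or_gt 0 t
  · exact (smul_nonneg ht fun i ↦ (hx i).le).trans hle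
  have hw : w - t • x = 0 := by
    refine hM.eq_zero_of_apply_eq_zero (sub_nonneg.2 hle) ?_ (i := i) (by simp [hi])
    rw [mulVec_sub, mulVec_smul, sub_nonneg]
    exact (smul_nonpos_of_nonpos_of_nonneg ht.le hMx).trans hMw
  rw [sub_eq_zero.1 hw, mulVec_smul] at hMw
  exact absurd (le_antisymm (fun j ↦ nonpos_of_mul_nonneg_right (hMw j) ht) hMx) hMx₀

lemma isUnit_of_mulVec_nonneg [DecidableEq ι] (hM : IsIrreducibleZMatrix M) {x : ι → K}
    (hx : ∀ i, 0 < x i) (hMx : 0 ≤ M *ᵥ x) (hMx₀ : M *ᵥ x ≠ 0) : IsUnit M := by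
  refine mulVec_injective_iff_isUnit.1 ((injective_iff_map_eq_zero M.mulVecLin).2 fun w hw ↦ ?_)
  have hw : M *ᵥ w = 0 := hw
  refine le_antisymm (neg_nonneg.1 ?_) (hM.nonneg_of_mulVec_nonneg hx hMx hMx₀ hw.ge)
  exact hM.nonneg_of_mulVec_nonneg hx hMx hMx₀ (by rw [mulVec_neg, hw, neg_zero])

end IsIrreducibleZMatrix

section PerronVector

variable {ι : Type*} [Fintype ι]

lemma exists_mem_stdSimplex_smul_le_mulVec {B : Matrix ι ι ℝ} {c : ℝ} {y : ι → ℝ} (hy : 0 ≤ y)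
    (hy₀ : y ≠ 0) (hc : c • y ≤ B *ᵥ y) : ∃ x ∈ stdSimplex ℝ ι, c • x ≤ B *ᵥ x := by
  have hsum : 0 < ∑ i, y i :=
    (Finset.sum_nonneg fun i _ ↦ hy i).lt_of_ne' fun h ↦
      hy₀ ((Fintype.sum_eq_zero_iff_of_nonneg hy).1 h)
  refine ⟨(∑ i, y i)⁻¹ • y, ⟨fun i ↦ mul_nonneg (inv_nonneg.2 hsum.le) (hy i), ?_⟩, ?_⟩
  · simp only [Pi.smul_apply, smul_eq_mul, ← Finset.mul_sum, inv_mul_cancel₀ hsum.ne']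
  · rw [mulVec_smul, smul_comm]
    exact smul_le_smul_of_nonneg_left hc (inv_nonneg.2 hsum.le)

lemma isCompact_setOf_mem_stdSimplex_smul_le_mulVec (B : Matrix ι ι ℝ) (a : ℝ) :
    IsCompact {p : ℝ × (ι → ℝ) | a ≤ p.1 ∧ p.2 ∈ stdSimplex ℝ ι ∧ p.1 • p.2 ≤ B *ᵥ p.2} := by
  have hcont : Continuous fun x : ι → ℝ ↦ B *ᵥ x := continuous_const.matrix_mulVec continuous_id
  obtain ⟨b, hb⟩ := (isCompact_stdSimplex ℝ ι).bddAbove_image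
    (f := fun x ↦ ∑ i, (B *ᵥ x) i) (by fun_prop)
  refine (isCompact_Icc (a := a) (b := b)).prod (isCompact_stdSimplex ℝ ι)
    |>.of_isClosed_subset ?_ ?_
  · exact (isClosed_le continuous_const continuous_fst).inter <|
      ((isClosed_stdSimplex ℝ ι).preimage continuous_snd).inter <|
        isClosed_le (by fun_prop) (hcont.comp continuous_snd)
  · rintro ⟨c, x⟩ ⟨ha, hx, hle⟩
    refine ⟨⟨ha, ?_⟩, hx⟩
    calc c = ∑ i, c * x i := by rw [← Finset.mul_sum, hx.2, mul_one]
      _ ≤ ∑ i, (B *ᵥ x) i := Finset.sum_le_sum fun i _ ↦ hle i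
      _ ≤ b := hb ⟨x, hx, rfl⟩

lemma exists_maximal_smul_le_mulVec [Nonempty ι] (B : Matrix ι ι ℝ) :
    ∃ (c : ℝ) (x : ι → ℝ), 0 ≤ x ∧ x ≠ 0 ∧ c • x ≤ B *ᵥ x ∧
      ∀ (d : ℝ) (y : ι → ℝ), 0 ≤ y → y ≠ 0 → d • y ≤ B *ᵥ y → d ≤ c := by
  obtain ⟨a, ha, -⟩ := exists_smul_le_and_apply_eq (v := 1) (fun _ : ι ↦ one_pos) (B *ᵥ 1)
  obtain ⟨x₀, hx₀, hax₀⟩ := exists_mem_stdSimplex_smul_le_mulVec zero_le_one one_ne_zero ha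
  obtain ⟨⟨c, x⟩, ⟨hac, hx, hcx⟩, hmax⟩ :=
    (isCompact_setOf_mem_stdSimplex_smul_le_mulVec B a).exists_isMaxOn ⟨(a, x₀), le_rfl, hx₀, hax₀⟩
      continuous_fst.continuousOn
  refine ⟨c, x, hx.1, ?_, hcx, fun d y hy hy₀ hdy ↦ ?_⟩
  · rintro rfl
    simpa using hx.2
  · obtain hda | had := le_total d a
    · exact hda.trans hac
    · obtain ⟨y', hy', hdy'⟩ := exists_mem_stdSimplex_smul_le_mulVec hy hy₀ hdy
      exact hmax (a := (d, y')) ⟨had, hy', hdy'⟩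

theorem IsIrreducibleZMatrix.exists_pos_eigenvector [Nonempty ι] {B : Matrix ι ι ℝ}
    (hB : IsIrreducibleZMatrix B) : ∃ (c : ℝ) (v : ι → ℝ), (∀ i, 0 < v i) ∧ B *ᵥ v = c • v := by
  classical
  obtain ⟨c, x, hx, hx₀, hle, hmax⟩ := exists_maximal_smul_le_mulVec B
  have hM := hB.sub_smul_one c
  have hMx : 0 ≤ (B - c • 1) *ᵥ x := by rwa [sub_smul_one_mulVec, sub_nonneg]
  have hxpos := hM.pos_of_mulVec_nonneg hx hMx hx₀
  refine ⟨c, x, hxpos, ?_⟩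
  by_contra hne
  have hMx₀ : (B - c • 1) *ᵥ x ≠ 0 := by rwa [sub_smul_one_mulVec, sub_ne_zero]
  obtain ⟨z, hz⟩ := mulVec_surjective_iff_isUnit.2 (hM.isUnit_of_mulVec_nonneg hxpos hMx hMx₀) x
  have hz_nonneg : 0 ≤ z := hM.nonneg_of_mulVec_nonneg hxpos hMx hMx₀ (hz.symm ▸ hx)
  have hz₀ : z ≠ 0 := by
    rintro rfl
    exact hx₀ (by rw [← hz, mulVec_zero])
  have hzpos := hM.pos_of_mulVec_nonneg hz_nonneg (hz.symm ▸ hx) hz₀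
  obtain ⟨ε, hεz, i, hi⟩ := exists_smul_le_and_apply_eq hzpos x
  have hε : 0 < ε := pos_of_mul_pos_left (hi ▸ hxpos i) (hzpos i).le
  have hcε : (c + ε) • z ≤ B *ᵥ z := calc
    (c + ε) • z = c • z + ε • z := add_smul c ε z
    _ ≤ c • z + x := by gcongr
    _ = B *ᵥ z := by rw [← hz, sub_smul_one_mulVec, add_sub_cancel]
  linarith [hmax (c + ε) z hz_nonneg hz₀ hcε]

theorem IsIrreducibleZMatrix.exists_pos_left_right_eigenvector [Nonempty ι] {B : Matrix ι ι ℝ}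
    (hB : IsIrreducibleZMatrix B) : ∃ (c : ℝ) (u v : ι → ℝ), (∀ i, 0 < u i) ∧ (∀ i, 0 < v i) ∧
      u ᵥ* B = c • u ∧ B *ᵥ v = c • v := by
  obtain ⟨c, v, hv, hBv⟩ := hB.exists_pos_eigenvector
  obtain ⟨d, u, hu, huB⟩ := hB.transpose.exists_pos_eigenvector
  rw [mulVec_transpose] at huB
  have huv : 0 < u ⬝ᵥ v := Finset.sum_pos (fun i _ ↦ mul_pos (hu i) (hv i)) Finset.univ_nonempty
  have hdc : d = c := mul_right_cancel₀ huv.ne' <| calc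
    d * (u ⬝ᵥ v) = u ⬝ᵥ B *ᵥ v := (dotProduct_mulVec_of_vecMul_eq_smul huB v).symm
    _ = c * (u ⬝ᵥ v) := by rw [hBv, dotProduct_smul, smul_eq_mul]
  exact ⟨c, u, v, hu, hv, hdc ▸ huB, hBv⟩

end PerronVector

section Spectrum

variable {ι : Type*} [Fintype ι]

lemma mulVec_norm_le_re_smul_norm {B : Matrix ι ι ℝ} (hB : ∀ ⦃i j⦄, i ≠ j → B i j ≤ 0) {μ : ℂ}
    {x : ι → ℂ} (hx : B.map (algebraMap ℝ ℂ) *ᵥ x = μ • x) :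
    (B *ᵥ fun i ↦ ‖x i‖) ≤ μ.re • fun i ↦ ‖x i‖ := by
  classical
  intro i
  have hxi : (μ - B i i) * x i = ∑ j ∈ Finset.univ.erase i, (B i j : ℂ) * x j := by
    have : ∑ j, (B i j : ℂ) * x j = μ * x i := congrFun hx i
    rw [sub_mul, ← this, ← Finset.add_sum_erase _ _ (Finset.mem_univ i), add_sub_cancel_left]
  have hnorm : ‖μ - B i i‖ * ‖x i‖ ≤ -∑ j ∈ Finset.univ.erase i, B i j * ‖x j‖ := by
    rw [← norm_mul, hxi, ← Finset.sum_neg_distrib]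
    refine norm_sum_le_of_le _ fun j hj ↦ ?_
    rw [norm_mul, Complex.norm_real, Real.norm_of_nonpos (hB (Finset.ne_of_mem_erase hj).symm),
      neg_mul]
  have hre : B i i - μ.re ≤ ‖μ - B i i‖ := by
    simpa [norm_sub_rev] using Complex.re_le_norm (B i i - μ)
  calc (B *ᵥ fun i ↦ ‖x i‖) i
      = B i i * ‖x i‖ + ∑ j ∈ Finset.univ.erase i, B i j * ‖x j‖ :=
        (Finset.add_sum_erase _ _ (Finset.mem_univ i)).symm
    _ ≤ B i i * ‖x i‖ - ‖μ - B i i‖ * ‖x i‖ := by linarith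
    _ ≤ B i i * ‖x i‖ - (B i i - μ.re) * ‖x i‖ := by gcongr
    _ = μ.re * ‖x i‖ := by ring

lemma le_re_of_vecMul_eq_smul {B : Matrix ι ι ℝ} (hB : ∀ ⦃i j⦄, i ≠ j → B i j ≤ 0) {c : ℝ}
    {u : ι → ℝ} (hu : ∀ i, 0 < u i) (huB : u ᵥ* B = c • u) {μ : ℂ} {x : ι → ℂ} (hx₀ : x ≠ 0)
    (hx : B.map (algebraMap ℝ ℂ) *ᵥ x = μ • x) : c ≤ μ.re := by
  have hpos : 0 < u ⬝ᵥ fun i ↦ ‖x i‖ :=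
    dotProduct_pos_of_pos_of_nonneg_of_ne_zero hu (fun i ↦ norm_nonneg (x i)) fun h ↦
      hx₀ <| funext fun i ↦ norm_eq_zero.1 (congrFun h i)
  refine le_of_mul_le_mul_right ?_ hpos
  calc c * (u ⬝ᵥ fun i ↦ ‖x i‖) = u ⬝ᵥ B *ᵥ fun i ↦ ‖x i‖ :=
        (dotProduct_mulVec_of_vecMul_eq_smul huB _).symm
    _ ≤ u ⬝ᵥ μ.re • fun i ↦ ‖x i‖ :=
        dotProduct_le_dotProduct_of_nonneg_left (mulVec_norm_le_re_smul_norm hB hx)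
          fun i ↦ (hu i).le
    _ = μ.re * (u ⬝ᵥ fun i ↦ ‖x i‖) := by rw [dotProduct_smul, smul_eq_mul]

end Spectrum

section Multiplicity

lemma maxGenEigenspace_eq_eigenspace_of_dual {R V : Type*} [CommRing R] [AddCommGroup V]
    [Module R V] {f : Module.End R V} {c : R} (φ : Module.Dual R V) (hφf : ∀ w, φ (f w) = c * φ w)
    (hφ : ∀ w ∈ f.eigenspace c, φ w = 0 → w = 0) : f.maxGenEigenspace c = f.eigenspace c := by
  refine le_antisymm (fun w hw ↦ ?_) f.eigenspace_le_maxGenEigenspace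
  obtain ⟨k, hk⟩ := (f.mem_maxGenEigenspace c w).1 hw
  clear hw
  induction k generalizing w with
  | zero =>
    rw [show w = 0 from hk]
    exact zero_mem _
  | succ k ih =>
    have hmem : (f - c • 1) w ∈ f.eigenspace c := ih _ (by rwa [pow_succ] at hk)
    have hzero : (f - c • 1) w = 0 := hφ _ hmem (by simp [hφf])
    exact Module.End.mem_eigenspace_iff.2 (sub_eq_zero.1 hzero)

variable {ι K : Type*} [Fintype ι] [DecidableEq ι] [Field K]

theorem rootMultiplicity_charpoly_eq_one_of_dotProduct_ne_zero {A : Matrix ι ι K} {c : K}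
    {u v : ι → K} (huA : u ᵥ* A = c • u) (hAv : A *ᵥ v = c • v) (huv : u ⬝ᵥ v ≠ 0)
    (hker : ∀ w, A *ᵥ w = c • w → ∃ t : K, w = t • v) : A.charpoly.rootMultiplicity c = 1 := by
  have hv₀ : v ≠ 0 := by
    rintro rfl
    exact huv (dotProduct_zero u)
  have hspan : Module.End.eigenspace (toLin' A) c = Submodule.span K {v} := by
    ext w
    rw [Module.End.mem_eigenspace_iff, toLin'_apply, Submodule.mem_span_singleton]
    refine ⟨fun hw ↦ (hker w hw).imp fun _ ↦ Eq.symm, ?_⟩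
    rintro ⟨t, rfl⟩
    rw [mulVec_smul, hAv, smul_comm]
  have hgen : Module.End.maxGenEigenspace (toLin' A) c = Module.End.eigenspace (toLin' A) c := by
    refine maxGenEigenspace_eq_eigenspace_of_dual (dotProductBilin K K u)
      (dotProduct_mulVec_of_vecMul_eq_smul huA) fun w hw hφ ↦ ?_
    obtain ⟨t, rfl⟩ := hker w (Module.End.mem_eigenspace_iff.1 hw)
    have ht : t * (u ⬝ᵥ v) = 0 := by rwa [← smul_eq_mul, ← dotProduct_smul]
    rw [(mul_eq_zero.1 ht).resolve_right huv, zero_smul]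
  rw [← charpoly_toLin', ← LinearMap.finrank_maxGenEigenspace_eq, hgen, hspan,
    finrank_span_singleton hv₀]

theorem IsIrreducibleZMatrix.rootMultiplicity_charpoly_eq_one [Nonempty ι] [LinearOrder K]
    [IsStrictOrderedRing K] {B : Matrix ι ι K} (hB : IsIrreducibleZMatrix B) {c : K} {u v : ι → K}
    (hu : ∀ i, 0 < u i) (hv : ∀ i, 0 < v i) (huB : u ᵥ* B = c • u) (hBv : B *ᵥ v = c • v) :
    B.charpoly.rootMultiplicity c = 1 := by
  refine rootMultiplicity_charpoly_eq_one_of_dotProduct_ne_zero huB hBv ?_ fun w hw ↦ ?_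
  · exact (Finset.sum_pos (fun i _ ↦ mul_pos (hu i) (hv i)) Finset.univ_nonempty).ne'
  · refine (hB.sub_smul_one c).exists_eq_smul_of_mulVec_eq_zero hv ?_ ?_
    · rw [sub_smul_one_mulVec, hBv, sub_self]
    · rw [sub_smul_one_mulVec, hw, sub_self]

end Multiplicity

section Laplacian

variable {n : ℕ} {W : Matrix (Fin n) (Fin n) ℝ}

lemma lapB_apply_ne (δ : Fin n → ℝ) {i j : Fin n} (hij : i ≠ j) : lapB W δ i j = -W i j := by
  simp [lapB, degMat, diagonal_apply_ne _ hij]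

lemma lapB_mulVec_one (W : Matrix (Fin n) (Fin n) ℝ) (δ : Fin n → ℝ) : lapB W δ *ᵥ 1 = δ := by
  ext i
  simp only [lapB, degMat, add_mulVec, sub_mulVec, Pi.add_apply, Pi.sub_apply, mulVec_diagonal]
  simp [mulVec, dotProduct]

lemma isIrreducibleZMatrix_lapB (hW : ∀ i j, 0 ≤ W i j) (hconn : StronglyConnected W)
    (δ : Fin n → ℝ) : IsIrreducibleZMatrix (lapB W δ) where
  nonpos_of_ne {i j} hij := by simpa [lapB_apply_ne δ hij] using hW i j
  connected i j := by
    refine Relation.reflTransGen_closed (fun a b hab ↦ ?_) _ _ (hconn i j)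
    obtain rfl | hne := eq_or_ne a b
    · exact .refl
    · exact .single ⟨hne, by simpa [lapB_apply_ne δ hne] using hab⟩

end Laplacian

lemma IsEigenvalue.exists_mulVec_eq_smul {n : ℕ} {M : Matrix (Fin n) (Fin n) ℝ} {μ : ℂ}
    (hμ : IsEigenvalue M μ) : ∃ x : Fin n → ℂ, x ≠ 0 ∧ M.map (algebraMap ℝ ℂ) *ᵥ x = μ • x := by
  rw [IsEigenvalue, ← charpoly_toLin', ← Module.End.hasEigenvalue_iff_isRoot_charpoly] at hμ
  obtain ⟨x, hx⟩ := hμ.exists_hasEigenvector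
  exact ⟨x, hx.2, hx.apply_eq_smul⟩

/-- Every eigenvalue of the perturbed Laplacian `L_B = L + diag(δ)` has
strictly positive real part; moreover the eigenvalue of smallest real part is a simple
real eigenvalue `λ₁`, and a corresponding eigenvector can be chosen entrywise positive. -/
theorem perturbedLaplacian_eigenvalues_pos_and_perron
    {n : ℕ} (W : Matrix (Fin n) (Fin n) ℝ)
    (hWnonneg : ∀ i j, 0 ≤ W i j)
    (hconn : StronglyConnected W)
    (δ : Fin n → ℝ) (hδnonneg : ∀ i, 0 ≤ δ i) (hδne : δ ≠ 0) :
    (∀ μ : ℂ, IsEigenvalue (lapB W δ) μ → 0 < μ.re) ∧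
    ∃ lam1 : ℝ,
      IsEigenvalue (lapB W δ) (lam1 : ℂ) ∧
      (∀ μ : ℂ, IsEigenvalue (lapB W δ) μ → lam1 ≤ μ.re) ∧
      Polynomial.rootMultiplicity (lam1 : ℂ)
        (((lapB W δ).map (algebraMap ℝ ℂ)).charpoly) = 1 ∧
      ∃ v : Fin n → ℝ, (∀ i, 0 < v i) ∧ lapB W δ *ᵥ v = lam1 • v := by
  obtain ⟨i, -⟩ := Function.ne_iff.1 hδne
  have : Nonempty (Fin n) := ⟨i⟩
  have hB := isIrreducibleZMatrix_lapB hWnonneg hconn δ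
  obtain ⟨c, u, v, hu, hv, huB, hBv⟩ := hB.exists_pos_left_right_eigenvector
  have hc : 0 < c := pos_of_vecMul_eq_smul_of_mulVec_nonneg hu huB zero_le_one
    (by rwa [lapB_mulVec_one]) (by rwa [lapB_mulVec_one])
  have hmin : ∀ μ : ℂ, IsEigenvalue (lapB W δ) μ → c ≤ μ.re := fun μ hμ ↦ by
    obtain ⟨x, hx₀, hx⟩ := hμ.exists_mulVec_eq_smul
    exact le_re_of_vecMul_eq_smul (fun _ _ ↦ hB.nonpos_of_ne) hu huB hx₀ hx
  have hsimple : rootMultiplicity (c : ℂ) ((lapB W δ).map (algebraMap ℝ ℂ)).charpoly = 1 := by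
    rw [charpoly_map, ← Complex.coe_algebraMap,
      ← eq_rootMultiplicity_map (algebraMap ℝ ℂ).injective]
    exact hB.rootMultiplicity_charpoly_eq_one hu hv huB hBv
  have heig : IsEigenvalue (lapB W δ) (c : ℂ) :=
    (rootMultiplicity_pos (charpoly_monic _).ne_zero).1 (hsimple ▸ one_pos)
  exact ⟨fun μ hμ ↦ hc.trans_le (hmin μ hμ), c, heig, hmin, hsimple, v, hv, hBv⟩
end

section
/- In the FSN network Ḡ of G, every node is reachable from the leader set: for every node i ∈ V there exist a leader l (i.e., δ_l > 0) and a finite sequence of nodes i = i₀, i₁, …, i_p = l such that w̄_{i_k i_{k+1}} > 0 for every k (each node in the path follows one of its retained in-neighbors). -/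
/-!
Writing `(L_B v)ᵢ = ∑ⱼ wᵢⱼ (vᵢ - vⱼ) + δᵢ vᵢ`, positivity of `L_B v` at a non-leader `i` forces some
term `wᵢⱼ (vᵢ - vⱼ)` to be positive, so `i` keeps an in-neighbor in the FSN network. Since `v`
strictly decreases along retained edges and there are finitely many nodes, following such neighbors
must stop, and it can only stop at a leader.
-/

open Matrix Polynomial

/-- The FSN ("following the slower neighbor") adjacency matrix:
`w̄_ij = w_ij` if `v_i > v_j`, and `w̄_ij = 0` otherwise. -/
noncomputable def fsn {n : ℕ} (W : Matrix (Fin n) (Fin n) ℝ) (v : Fin n → ℝ) :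
    Matrix (Fin n) (Fin n) ℝ :=
  Matrix.of fun i j => if v j < v i then W i j else 0

theorem exists_reflTransGen_of_wellFounded {α : Type*} {r : α → α → Prop} {p : α → Prop}
    (hwf : WellFounded (flip r)) (hstep : ∀ a, ¬ p a → ∃ b, r a b) (a : α) :
    ∃ b, p b ∧ Relation.ReflTransGen r a b := by
  induction a using hwf.induction with
  | _ a ih =>
    by_cases ha : p a
    · exact ⟨a, ha, .refl⟩
    · obtain ⟨b, hab⟩ := hstep a ha
      obtain ⟨c, hc, hbc⟩ := ih b hab
      exact ⟨c, hc, hbc.head hab⟩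

theorem wellFounded_onFun_lt_of_finite {α β : Type*} [Finite α] [Preorder β] (f : α → β) :
    WellFounded (Function.onFun (· < ·) f) :=
  letI := Preorder.lift f
  wellFounded_lt

section FSN

variable {n : ℕ} {W : Matrix (Fin n) (Fin n) ℝ} {δ v : Fin n → ℝ} {i j : Fin n}

theorem lapB_mulVec_apply : (lapB W δ *ᵥ v) i = ∑ j, W i j * (v i - v j) + δ i * v i := by
  simp only [lapB, degMat, add_mulVec, sub_mulVec, Pi.add_apply, Pi.sub_apply, mulVec_diagonal,
    mul_sub, Finset.sum_sub_distrib, Finset.sum_mul]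
  simp only [mulVec, dotProduct]

theorem fsn_pos_iff : 0 < fsn W v i j ↔ v j < v i ∧ 0 < W i j := by
  by_cases hij : v j < v i <;> simp [fsn, hij]

theorem wellFounded_flip_fsn_pos : WellFounded (flip fun i j => 0 < fsn W v i j) :=
  Subrelation.wf (fun h => (fsn_pos_iff.mp h).1) (wellFounded_onFun_lt_of_finite v)

theorem exists_fsn_pos_of_sum_pos (hW : ∀ j, 0 ≤ W i j)
    (hsum : 0 < ∑ j, W i j * (v i - v j)) : ∃ j, 0 < fsn W v i j := by
  obtain ⟨j, -, hj⟩ : ∃ j ∈ Finset.univ, 0 < W i j * (v i - v j) :=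
    Finset.exists_lt_of_sum_lt (by simpa using hsum)
  have hv : v j < v i := sub_pos.mp (pos_of_mul_pos_right hj (hW j))
  exact ⟨j, fsn_pos_iff.mpr ⟨hv, pos_of_mul_pos_left hj (sub_pos.mpr hv).le⟩⟩

theorem exists_fsn_pos_of_lapB_mulVec_pos (hW : ∀ j, 0 ≤ W i j) (hδ : δ i ≤ 0)
    (hv : 0 ≤ v i) (hLv : 0 < (lapB W δ *ᵥ v) i) : ∃ j, 0 < fsn W v i j := by
  rw [lapB_mulVec_apply] at hLv
  have hδv : δ i * v i ≤ 0 := mul_nonpos_of_nonpos_of_nonneg hδ hv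
  exact exists_fsn_pos_of_sum_pos hW (by linarith)

end FSN

theorem fsn_reachable_from_leaders_general
    {n : ℕ} (W : Matrix (Fin n) (Fin n) ℝ) (hW : ∀ i j, 0 ≤ W i j)
    (δ v : Fin n → ℝ) (hv : ∀ i, 0 ≤ v i) (hLv : ∀ i, 0 < (lapB W δ *ᵥ v) i) (i : Fin n) :
    ∃ l : Fin n, 0 < δ l ∧ Relation.ReflTransGen (fun a b => 0 < fsn W v a b) i l :=
  exists_reflTransGen_of_wellFounded wellFounded_flip_fsn_pos
    (fun a ha => exists_fsn_pos_of_lapB_mulVec_pos (hW a) (not_lt.mp ha) (hv a) (hLv a)) i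

/-- In the FSN network of `G`, every node is reachable from the leader
set: for every node `i` there is a leader `l` (`δ l > 0`) and a directed path
`i = i₀, i₁, …, i_p = l` with `w̄_{i_k i_{k+1}} > 0` for every `k`. -/
theorem fsn_reachable_from_leaders
    {n : ℕ} (W : Matrix (Fin n) (Fin n) ℝ)
    (hWnonneg : ∀ i j, 0 ≤ W i j)
    (hconn : StronglyConnected W)
    (δ : Fin n → ℝ) (hδnonneg : ∀ i, 0 ≤ δ i) (hδne : δ ≠ 0)
    (lam1 : ℝ) (hlam1 : 0 < lam1)
    (v : Fin n → ℝ) (hv : ∀ i, 0 < v i)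
    (hveig : lapB W δ *ᵥ v = lam1 • v) :
    ∀ i : Fin n, ∃ l : Fin n, 0 < δ l ∧
      Relation.ReflTransGen (fun a b => 0 < fsn W v a b) i l := by
  refine fsn_reachable_from_leaders_general W hWnonneg δ v (fun i => (hv i).le) fun i => ?_
  simpa [hveig] using mul_pos hlam1 (hv i)
end

section
/- If the follower set is nonempty, i.e., δ_i = 0 for at least one node i, then there exists at least one edge (i,j) ∈ E (that is, w_ij > 0) such that v_j > v_i. -/
open Matrix Polynomial

/-!
A row of `L v` is `∑ j, w_ij (v_i - v_j)`, so `L` kills constant vectors. The eigenvector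
equation at `i` reads `(L v)_i = (λ₁ - δ_i) v_i`, which is nonzero at a follower, hence `v` takes
two different values. A path from a node with the smaller value to one with the larger value must
increase along some edge.
-/

theorem exists_rel_lt_of_reflTransGen {α β : Type*} [LinearOrder β] {r : α → α → Prop}
    {f : α → β} {a b : α} (hpath : Relation.ReflTransGen r a b) (hlt : f a < f b) :
    ∃ i j, r i j ∧ f i < f j := by
  by_contra! hdesc
  induction hpath with
  | refl => exact hlt.false
  | tail _ hstep ih => exact ih (hlt.trans_le (hdesc _ _ hstep))

section Laplacian

variable {ι R : Type*} [Fintype ι] [DecidableEq ι] [NonUnitalNonAssocRing R]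

/-- The Laplacian `L = D - W` of the weighted digraph with adjacency matrix `W`, where `D` is the
diagonal matrix of row sums; `lapB W δ` is definitionally `digraphLaplacian W + diagonal δ`. -/
def digraphLaplacian (W : Matrix ι ι R) : Matrix ι ι R :=
  diagonal (fun i => ∑ j, W i j) - W

theorem digraphLaplacian_mulVec_apply (W : Matrix ι ι R) (v : ι → R) (i : ι) :
    (digraphLaplacian W *ᵥ v) i = ∑ j, W i j * (v i - v j) := by
  rw [digraphLaplacian, sub_mulVec, Pi.sub_apply, mulVec_diagonal, Finset.sum_mul]
  simp only [mul_sub, Finset.sum_sub_distrib, mulVec, dotProduct]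

theorem exists_ne_of_digraphLaplacian_mulVec_apply_ne_zero {W : Matrix ι ι R} {v : ι → R} {i : ι}
    (hLv : (digraphLaplacian W *ᵥ v) i ≠ 0) : ∃ j, v i ≠ v j := by
  contrapose! hLv with hconst
  simp only [digraphLaplacian_mulVec_apply, ← hconst, sub_self, mul_zero, Finset.sum_const_zero]

theorem exists_increasing_edge_of_follower_general [NoZeroDivisors R] [LinearOrder R]
    {W : Matrix ι ι R} (hconn : ∀ i j, Relation.ReflTransGen (fun a b => 0 < W a b) i j)
    {δ v : ι → R} {lam : R} (hveig : (digraphLaplacian W + diagonal δ) *ᵥ v = lam • v)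
    {i : ι} (hδ : δ i ≠ lam) (hv : v i ≠ 0) :
    ∃ i j, 0 < W i j ∧ v i < v j := by
  have hrow : (digraphLaplacian W *ᵥ v) i = (lam - δ i) * v i := by
    have hi := congrFun hveig i
    rw [add_mulVec, Pi.add_apply, mulVec_diagonal, Pi.smul_apply, smul_eq_mul] at hi
    rw [sub_mul, eq_sub_of_add_eq hi]
  have hLv : (digraphLaplacian W *ᵥ v) i ≠ 0 := by
    rw [hrow]
    exact mul_ne_zero (sub_ne_zero.2 hδ.symm) hv
  obtain ⟨j, hij⟩ := exists_ne_of_digraphLaplacian_mulVec_apply_ne_zero hLv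
  rcases hij.lt_or_gt with hlt | hgt
  · exact exists_rel_lt_of_reflTransGen (hconn i j) hlt
  · exact exists_rel_lt_of_reflTransGen (hconn j i) hgt

end Laplacian

/-- If the follower set is nonempty (some `δ i = 0`), then there exists
an edge `(i, j) ∈ E` (i.e. `w_ij > 0`) with `v_j > v_i`. -/
theorem exists_increasing_edge_of_follower
    {n : ℕ} (W : Matrix (Fin n) (Fin n) ℝ)
    (hWnonneg : ∀ i j, 0 ≤ W i j)
    (hconn : StronglyConnected W)
    (δ : Fin n → ℝ) (hδnonneg : ∀ i, 0 ≤ δ i) (hδne : δ ≠ 0)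
    (lam1 : ℝ) (hlam1 : 0 < lam1)
    (v : Fin n → ℝ) (hv : ∀ i, 0 < v i)
    (hveig : lapB W δ *ᵥ v = lam1 • v)
    (hfollower : ∃ i, δ i = 0) :
    ∃ i j : Fin n, 0 < W i j ∧ v i < v j := by
  obtain ⟨i, hi⟩ := hfollower
  exact exists_increasing_edge_of_follower_general hconn hveig (hi.trans_ne hlam1.ne) (hv i).ne'
end

section
/- Every node i with δ_i = 0 (every follower) retains at least one in-neighbor in the FSN network: there exists j with w_ij > 0 and v_j < v_i. -/
open Matrix Polynomial

section WeightedLaplacian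

variable {ι R : Type*} [Fintype ι] [DecidableEq ι]

/-- The Laplacian `L = D - W` of the weighted digraph with adjacency matrix `W`, where `W i j` is
the weight of the edge from `j` into `i` and `D` is the diagonal matrix of row sums of `W`. It
extends the unperturbed part of `lapB` to any finite vertex type and any ring of weights. -/
def weightedLaplacian [NonUnitalNonAssocRing R] (W : Matrix ι ι R) : Matrix ι ι R :=
  diagonal (fun i => ∑ j, W i j) - W

theorem weightedLaplacian_mulVec_apply [NonUnitalNonAssocRing R]
    (W : Matrix ι ι R) (v : ι → R) (i : ι) :
    (weightedLaplacian W *ᵥ v) i = ∑ j, W i j * (v i - v j) :=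
  calc
    (weightedLaplacian W *ᵥ v) i = (∑ j, W i j) * v i - ∑ j, W i j * v j := by
      rw [weightedLaplacian, sub_mulVec, Pi.sub_apply, mulVec_diagonal]
      rfl
    _ = ∑ j, W i j * (v i - v j) := by
      simp only [Finset.sum_mul, mul_sub, Finset.sum_sub_distrib]

theorem weightedLaplacian_mulVec_apply_of_add_diagonal_mulVec_eq_smul
    [NonUnitalNonAssocRing R] {W : Matrix ι ι R} {δ v : ι → R} {lam : R}
    (heig : (weightedLaplacian W + diagonal δ) *ᵥ v = lam • v) (i : ι) :
    (weightedLaplacian W *ᵥ v) i = (lam - δ i) * v i := by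
  have hrow : (weightedLaplacian W *ᵥ v) i + δ i * v i = lam * v i := by
    simpa only [add_mulVec, Pi.add_apply, mulVec_diagonal, Pi.smul_apply, smul_eq_mul]
      using congrFun heig i
  rw [sub_mul, eq_sub_of_add_eq hrow]

theorem exists_pos_and_lt_of_weightedLaplacian_mulVec_pos
    [Ring R] [LinearOrder R] [IsOrderedRing R] {W : Matrix ι ι R} {v : ι → R} {i : ι}
    (hW : ∀ j, 0 ≤ W i j) (hpos : 0 < (weightedLaplacian W *ᵥ v) i) :
    ∃ j, 0 < W i j ∧ v j < v i := by
  rw [weightedLaplacian_mulVec_apply] at hpos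
  obtain ⟨j, -, hj⟩ : ∃ j ∈ Finset.univ, 0 < W i j * (v i - v j) :=
    Finset.exists_lt_of_sum_lt (by simpa only [Finset.sum_const_zero] using hpos)
  have hWij : 0 < W i j := (hW j).lt_of_ne' (left_ne_zero_of_mul hj.ne')
  have hvj : v j < v i := by
    by_contra! hle
    exact hj.not_ge (mul_nonpos_of_nonneg_of_nonpos (hW j) (sub_nonpos.mpr hle))
  exact ⟨j, hWij, hvj⟩

theorem follower_retains_inneighbor_general
    [Ring R] [LinearOrder R] [IsStrictOrderedRing R]
    {W : Matrix ι ι R} {δ v : ι → R} {lam : R} {i : ι}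
    (hW : ∀ j, 0 ≤ W i j) (heig : (weightedLaplacian W + diagonal δ) *ᵥ v = lam • v)
    (hδ : δ i < lam) (hv : 0 < v i) :
    ∃ j, 0 < W i j ∧ v j < v i := by
  apply exists_pos_and_lt_of_weightedLaplacian_mulVec_pos hW
  rw [weightedLaplacian_mulVec_apply_of_add_diagonal_mulVec_eq_smul heig]
  exact mul_pos (sub_pos.mpr hδ) hv

end WeightedLaplacian

/-- Every follower (node `i` with `δ i = 0`) retains at least one
in-neighbor in the FSN network: there is `j` with `w_ij > 0` and `v_j < v_i`. -/
theorem follower_retains_inneighbor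
    {n : ℕ} (W : Matrix (Fin n) (Fin n) ℝ)
    (hWnonneg : ∀ i j, 0 ≤ W i j)
    (hconn : StronglyConnected W)
    (δ : Fin n → ℝ) (hδnonneg : ∀ i, 0 ≤ δ i) (hδne : δ ≠ 0)
    (lam1 : ℝ) (hlam1 : 0 < lam1)
    (v : Fin n → ℝ) (hv : ∀ i, 0 < v i)
    (hveig : lapB W δ *ᵥ v = lam1 • v) :
    ∀ i : Fin n, δ i = 0 → ∃ j : Fin n, 0 < W i j ∧ v j < v i :=
  fun i hi => follower_retains_inneighbor_general (hWnonneg i) hveig (hi.trans_lt hlam1) (hv i)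
end

section
/- Every node i with δ_i = 0 (every follower) retains at least one in-neighbor other than itself in the FSN network: there exists j ≠ i with w_ij > 0 and v_j < v_i. -/
open Matrix Polynomial

/-- The perturbed stochastic matrix `P = (D + diag(δ))⁻¹ W`. -/
noncomputable def Pmat {n : ℕ} (W : Matrix (Fin n) (Fin n) ℝ) (δ : Fin n → ℝ) :
    Matrix (Fin n) (Fin n) ℝ :=
  (degMat W + Matrix.diagonal δ)⁻¹ * W

/-!
At a follower `i` row `i` of the eigenvector equation, multiplied by `d_i`, reads
`∑ j, w_ij v_j = d_i λ v_i`, and `d_i λ v_i < d_i v_i = ∑ j, w_ij v_i` since `λ < 1`. So the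
weighted average of `v` over the in-neighbors of `i` is below `v_i`, and some in-neighbor has a
value below `v_i`; the self-loop is excluded because the inequality is strict.
-/

theorem exists_pos_and_lt_of_sum_mul_lt_sum_mul {ι R : Type*} [Semiring R] [LinearOrder R]
    [IsOrderedRing R] {s : Finset ι} {w v : ι → R} {c : R} (hw : ∀ j ∈ s, 0 ≤ w j)
    (h : ∑ j ∈ s, w j * v j < (∑ j ∈ s, w j) * c) : ∃ j ∈ s, 0 < w j ∧ v j < c := by
  rw [Finset.sum_mul] at h
  obtain ⟨j, hj, hlt⟩ := Finset.exists_lt_of_sum_lt h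
  have hne : w j ≠ 0 := fun h0 => by simp only [h0, zero_mul, lt_irrefl] at hlt
  exact ⟨j, hj, (hw j hj).lt_of_ne' hne, lt_of_not_ge fun hge =>
    hlt.not_ge (mul_le_mul_of_nonneg_left hge (hw j hj))⟩

theorem sum_add_pos_of_pos {ι M : Type*} [Fintype ι] [AddCommMonoid M] [PartialOrder M]
    [IsOrderedCancelAddMonoid M] {w : ι → M} {k : ι} {a : M} (hw : ∀ j, 0 ≤ w j) (hk : 0 < w k)
    (ha : 0 ≤ a) : 0 < ∑ j, w j + a :=
  add_pos_of_pos_of_nonneg (Finset.sum_pos' (fun j _ => hw j) ⟨k, Finset.mem_univ k, hk⟩) ha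

theorem mulVec_eq_smul_mulVec_of_inv_mul_mulVec_eq_smul {ι R : Type*} [Fintype ι] [DecidableEq ι]
    [CommRing R] {A W : Matrix ι ι R} {v : ι → R} {μ : R} (hA : IsUnit A)
    (h : (A⁻¹ * W) *ᵥ v = μ • v) : W *ᵥ v = μ • (A *ᵥ v) := by
  have hdet : IsUnit A.det := (isUnit_iff_isUnit_det A).mp hA
  rw [← mulVec_smul, ← h, mulVec_mulVec, mul_nonsing_inv_cancel_left A W hdet]

theorem follower_retains_inneighbor_dlfn_general {ι K : Type*} [Fintype ι] [DecidableEq ι]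
    [Field K] [LinearOrder K] [IsStrictOrderedRing K] {W : Matrix ι ι K} {δ v : ι → K} {μ : K}
    {i : ι} (hD : ∀ k, ∑ j, W k j + δ k ≠ 0) (hW : ∀ j, 0 ≤ W i j) (hδ : δ i = 0)
    (hμ : μ < 1) (hv : 0 < v i)
    (heig : (((diagonal fun k => ∑ j, W k j) + diagonal δ)⁻¹ * W) *ᵥ v = μ • v) :
    ∃ j, j ≠ i ∧ 0 < W i j ∧ v j < v i := by
  rw [diagonal_add] at heig
  have hunit : IsUnit (diagonal fun k => ∑ j, W k j + δ k) :=
    isUnit_diagonal.mpr <| Pi.isUnit_iff.mpr fun k => (hD k).isUnit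
  have hrow : (W *ᵥ v) i = μ * ((∑ j, W i j) * v i) := by
    simpa only [mulVec_diagonal, Pi.smul_apply, smul_eq_mul, hδ, add_zero] using
      congrFun (mulVec_eq_smul_mulVec_of_inv_mul_mulVec_eq_smul hunit heig) i
  have hdeg : 0 < ∑ j, W i j :=
    (Finset.sum_nonneg fun j _ => hW j).lt_of_ne' (by simpa only [hδ, add_zero] using hD i)
  have hlt : ∑ j, W i j * v j < (∑ j, W i j) * v i := by
    calc ∑ j, W i j * v j
      _ = (W *ᵥ v) i := (mulVec_apply_eq_sum W v i).symm
      _ = μ * ((∑ j, W i j) * v i) := hrow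
      _ < (∑ j, W i j) * v i := mul_lt_of_lt_one_left (mul_pos hdeg hv) hμ
  obtain ⟨j, -, hpos, hvj⟩ := exists_pos_and_lt_of_sum_mul_lt_sum_mul (fun j _ => hW j) hlt
  exact ⟨j, ne_of_apply_ne v hvj.ne, hpos, hvj⟩

/-- Every follower (node `i` with `δ i = 0`) retains at least one
in-neighbor other than itself in the FSN network: there is `j ≠ i` with `w_ij > 0`
and `v_j < v_i`. -/
theorem follower_retains_inneighbor_dlfn
    {n : ℕ} (W : Matrix (Fin n) (Fin n) ℝ)
    (hWnonneg : ∀ i j, 0 ≤ W i j) (hWdiag : ∀ i, 0 < W i i)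
    (hconn : StronglyConnected W)
    (δ : Fin n → ℝ) (hδnonneg : ∀ i, 0 ≤ δ i) (hδne : δ ≠ 0)
    (lamn : ℝ) (hlamn : lamn < 1)
    (v : Fin n → ℝ) (hv : ∀ i, 0 < v i)
    (hveig : Pmat W δ *ᵥ v = lamn • v) :
    ∀ i : Fin n, δ i = 0 → ∃ j : Fin n, j ≠ i ∧ 0 < W i j ∧ v j < v i := by
  have hD k := (sum_add_pos_of_pos (hWnonneg k) (hWdiag k) (hδnonneg k)).ne'
  exact fun i hi => follower_retains_inneighbor_dlfn_general hD (hWnonneg i) hi hlamn (hv i) hveig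
end

section
/- For the augmented directed graph Ĝ on n+1 nodes obtained by adjoining an input node u to G with weight matrix Ŵ = [[W, δ],[0, 0]], the augmented Laplacian L̂ = [[L_B, −δ],[0, 0]] has the property that every eigenvalue of L_B is an eigenvalue of L̂; in particular, since Ĝ has a directed spanning tree rooted at u, L̂ has a simple zero eigenvalue and all its other eigenvalues have positive real part, so every eigenvalue of L_B has positive real part. -/
open Matrix Polynomial

/-- `μ : ℂ` is an eigenvalue of a real square matrix. -/
def IsEigOf {m : Type*} [Fintype m] [DecidableEq m]
    (M : Matrix m m ℝ) (μ : ℂ) : Prop :=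
  ((M.map (algebraMap ℝ ℂ)).charpoly).IsRoot μ

/-- The adjacency matrix `Ŵ = [[W, δ], [0, 0]]` of the augmented graph `Ĝ` obtained by
adjoining the input node `u` to `G`. -/
def What {n : ℕ} (W : Matrix (Fin n) (Fin n) ℝ) (δ : Fin n → ℝ) :
    Matrix (Fin n ⊕ Fin 1) (Fin n ⊕ Fin 1) ℝ :=
  Matrix.fromBlocks W (Matrix.of fun i (_ : Fin 1) => δ i) 0 0

/-- The augmented Laplacian `L̂ = [[L_B, -δ], [0, 0]]`. -/
def Lhat {n : ℕ} (W : Matrix (Fin n) (Fin n) ℝ) (δ : Fin n → ℝ) :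
    Matrix (Fin n ⊕ Fin 1) (Fin n ⊕ Fin 1) ℝ :=
  Matrix.fromBlocks (lapB W δ) (-(Matrix.of fun i (_ : Fin 1) => δ i)) 0 0

/-!
Row `i` of `L_B` has diagonal entry `∑ j ≠ i, w_ij + δ_i` and off-diagonal entries `-w_ij`, so it is
weakly diagonally dominant, strictly when `δ_i > 0`. Hence `L_B` is weakly chained diagonally
dominant as soon as every node reaches the support of `δ`. Subtracting `μ` with `re μ ≤ 0` from the
diagonal only enlarges the moduli of the nonnegative diagonal entries, so `μ - L_B` is again weakly
chained diagonally dominant and therefore invertible: every eigenvalue of `L_B` has positive real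
part. As `L̂` is block triangular, its characteristic polynomial is that of `L_B` times `X`.
-/

/-- Weakly chained diagonal dominance: every row is weakly diagonally dominant, and from every row
one can walk along nonzero entries to a strictly dominant row. It is the criterion by which
`μ - L_B` is shown to be invertible. Diagonal entries count as steps of a walk, which does not
change reachability. -/
structure WeaklyChainedDiagDominant {ι K : Type*} [Fintype ι] [DecidableEq ι] [NormedField K]
    (A : Matrix ι ι K) : Prop where
  sum_norm_le : ∀ i, ∑ j ∈ Finset.univ.erase i, ‖A i j‖ ≤ ‖A i i‖
  exists_chain : ∀ i, ∃ k, Relation.ReflTransGen (fun a b => A a b ≠ 0) i k ∧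
    ∑ j ∈ Finset.univ.erase k, ‖A k j‖ < ‖A k k‖

section DiagonalDominance

variable {ι K : Type*} [Fintype ι] [DecidableEq ι] [NormedField K] {A : Matrix ι ι K} {v : ι → K}

theorem norm_diag_mul_norm_le_of_mulVec_eq_zero (hv : A *ᵥ v = 0) (i : ι) :
    ‖A i i‖ * ‖v i‖ ≤ ∑ j ∈ Finset.univ.erase i, ‖A i j‖ * ‖v j‖ := by
  have hrow : A i i * v i + ∑ j ∈ Finset.univ.erase i, A i j * v j = 0 :=
    (Finset.add_sum_erase _ _ (Finset.mem_univ i)).trans (congrFun hv i)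
  calc ‖A i i‖ * ‖v i‖ = ‖∑ j ∈ Finset.univ.erase i, A i j * v j‖ := by
        rw [← norm_mul, eq_neg_of_add_eq_zero_left hrow, norm_neg]
    _ ≤ ∑ j ∈ Finset.univ.erase i, ‖A i j‖ * ‖v j‖ :=
        norm_sum_le_of_le _ fun j _ => norm_mul_le _ _

theorem norm_eq_of_mulVec_eq_zero_of_forall_norm_le (hv : A *ᵥ v = 0) {i j : ι}
    (hi : ∑ j ∈ Finset.univ.erase i, ‖A i j‖ ≤ ‖A i i‖) (hmax : ∀ k, ‖v k‖ ≤ ‖v i‖)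
    (hij : A i j ≠ 0) : ‖v j‖ = ‖v i‖ := by
  by_contra hne
  have hlt : ‖v j‖ < ‖v i‖ := (hmax j).lt_of_ne hne
  have hj : j ∈ Finset.univ.erase i :=
    Finset.mem_erase.mpr ⟨fun h => hne (by rw [h]), Finset.mem_univ j⟩
  refine lt_irrefl (‖A i i‖ * ‖v i‖) ?_
  calc ‖A i i‖ * ‖v i‖ ≤ ∑ k ∈ Finset.univ.erase i, ‖A i k‖ * ‖v k‖ :=
        norm_diag_mul_norm_le_of_mulVec_eq_zero hv i
    _ < ∑ k ∈ Finset.univ.erase i, ‖A i k‖ * ‖v i‖ :=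
        Finset.sum_lt_sum (fun k _ => mul_le_mul_of_nonneg_left (hmax k) (norm_nonneg _))
          ⟨j, hj, mul_lt_mul_of_pos_left hlt (norm_pos_iff.mpr hij)⟩
    _ = (∑ k ∈ Finset.univ.erase i, ‖A i k‖) * ‖v i‖ := (Finset.sum_mul ..).symm
    _ ≤ ‖A i i‖ * ‖v i‖ := mul_le_mul_of_nonneg_right hi (norm_nonneg _)

theorem eq_zero_of_mulVec_eq_zero_of_forall_norm_le (hv : A *ᵥ v = 0) {i : ι}
    (hi : ∑ j ∈ Finset.univ.erase i, ‖A i j‖ < ‖A i i‖) (hmax : ∀ k, ‖v k‖ ≤ ‖v i‖) :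
    v i = 0 := by
  by_contra hne
  refine lt_irrefl (‖A i i‖ * ‖v i‖) ?_
  calc ‖A i i‖ * ‖v i‖ ≤ ∑ k ∈ Finset.univ.erase i, ‖A i k‖ * ‖v k‖ :=
        norm_diag_mul_norm_le_of_mulVec_eq_zero hv i
    _ ≤ ∑ k ∈ Finset.univ.erase i, ‖A i k‖ * ‖v i‖ :=
        Finset.sum_le_sum fun k _ => mul_le_mul_of_nonneg_left (hmax k) (norm_nonneg _)
    _ = (∑ k ∈ Finset.univ.erase i, ‖A i k‖) * ‖v i‖ := (Finset.sum_mul ..).symm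
    _ < ‖A i i‖ * ‖v i‖ := mul_lt_mul_of_pos_right hi (norm_pos_iff.mpr hne)

namespace WeaklyChainedDiagDominant

theorem det_ne_zero (hA : WeaklyChainedDiagDominant A) : A.det ≠ 0 := by
  intro hdet
  obtain ⟨v, hv_ne, hv⟩ := Matrix.exists_mulVec_eq_zero_iff.mpr hdet
  obtain ⟨i₀, hi₀⟩ := Function.ne_iff.mp hv_ne
  have : Nonempty ι := ⟨i₀⟩
  obtain ⟨m, hm⟩ := Finite.exists_max fun i => ‖v i‖
  obtain ⟨k, hmk, hk⟩ := hA.exists_chain m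
  have hkm : ‖v k‖ = ‖v m‖ := by
    clear hk
    induction hmk with
    | refl => rfl
    | tail _ hbc ih =>
      rw [← ih]
      exact norm_eq_of_mulVec_eq_zero_of_forall_norm_le hv (hA.sum_norm_le _) (ih ▸ hm) hbc
  have hvk : v k = 0 := eq_zero_of_mulVec_eq_zero_of_forall_norm_le hv hk (hkm ▸ hm)
  exact hi₀ (norm_le_zero_iff.mp (by simpa [← hkm, hvk] using hm i₀))

theorem of_norm_eq_of_norm_diag_le {L : Type*} [NormedField L] {B : Matrix ι ι L}
    (hA : WeaklyChainedDiagDominant A)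
    (hoff : ∀ i j, i ≠ j → ‖B i j‖ = ‖A i j‖) (hdiag : ∀ i, ‖A i i‖ ≤ ‖B i i‖) :
    WeaklyChainedDiagDominant B := by
  have hsum (i : ι) :
      ∑ j ∈ Finset.univ.erase i, ‖B i j‖ = ∑ j ∈ Finset.univ.erase i, ‖A i j‖ :=
    Finset.sum_congr rfl fun j hj => hoff i j (Finset.ne_of_mem_erase hj).symm
  have hstep (a b : ι) (hab : A a b ≠ 0) : B a b ≠ 0 := by
    have hle : ‖A a b‖ ≤ ‖B a b‖ := by
      rcases eq_or_ne a b with rfl | hne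
      · exact hdiag a
      · exact (hoff a b hne).ge
    exact norm_pos_iff.mp ((norm_pos_iff.mpr hab).trans_le hle)
  refine ⟨fun i => hsum i ▸ (hA.sum_norm_le i).trans (hdiag i), fun i => ?_⟩
  obtain ⟨k, hik, hk⟩ := hA.exists_chain i
  exact ⟨k, Relation.ReflTransGen.mono hstep _ _ hik, hsum k ▸ hk.trans_le (hdiag k)⟩

theorem re_pos_of_isEigOf {A : Matrix ι ι ℝ} (hA : WeaklyChainedDiagDominant A)
    (hdiag : ∀ i, 0 ≤ A i i) {μ : ℂ} (hμ : IsEigOf A μ) : 0 < μ.re := by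
  by_contra! hre
  have hdet : (scalar ι μ - A.map (algebraMap ℝ ℂ)).det = 0 :=
    (Matrix.eval_charpoly _ _).symm.trans hμ
  refine (hA.of_norm_eq_of_norm_diag_le (fun i j hij => ?_) fun i => ?_).det_ne_zero hdet
  · simp [hij]
  · calc ‖A i i‖ = A i i := Real.norm_of_nonneg (hdiag i)
      _ ≤ ((A i i : ℂ) - μ).re := by simpa using hre
      _ ≤ ‖(A i i : ℂ) - μ‖ := Complex.re_le_norm _
      _ = ‖(scalar ι μ - A.map (algebraMap ℝ ℂ)) i i‖ := by simp [norm_sub_rev]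

end WeaklyChainedDiagDominant

end DiagonalDominance

section Laplacian

variable {n : ℕ} {W : Matrix (Fin n) (Fin n) ℝ} {δ : Fin n → ℝ}

theorem lapB_apply_of_ne {i j : Fin n} (hij : i ≠ j) : lapB W δ i j = -W i j := by
  simp [lapB, degMat, hij]

theorem lapB_apply_self (i : Fin n) :
    lapB W δ i i = ∑ j ∈ Finset.univ.erase i, W i j + δ i := by
  have hrow := Finset.sum_erase_eq_sub (f := W i) (Finset.mem_univ i)
  simp [lapB, degMat, hrow]

theorem lapB_apply_self_nonneg (hW : ∀ i j, 0 ≤ W i j) (hδ : ∀ i, 0 ≤ δ i) (i : Fin n) :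
    0 ≤ lapB W δ i i := by
  rw [lapB_apply_self]
  exact add_nonneg (Finset.sum_nonneg fun j _ => hW i j) (hδ i)

theorem sum_erase_norm_lapB_add (hW : ∀ i j, 0 ≤ W i j) (hδ : ∀ i, 0 ≤ δ i) (i : Fin n) :
    ∑ j ∈ Finset.univ.erase i, ‖lapB W δ i j‖ + δ i = ‖lapB W δ i i‖ := by
  rw [Real.norm_of_nonneg (lapB_apply_self_nonneg hW hδ i), lapB_apply_self]
  congr 1
  refine Finset.sum_congr rfl fun j hj => ?_
  rw [lapB_apply_of_ne (Finset.ne_of_mem_erase hj).symm, norm_neg, Real.norm_of_nonneg (hW i j)]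

theorem weaklyChainedDiagDominant_lapB (hW : ∀ i j, 0 ≤ W i j) (hδ : ∀ i, 0 ≤ δ i)
    (hreach : ∀ i, ∃ k, Relation.ReflTransGen (fun a b => 0 < W a b) i k ∧ 0 < δ k) :
    WeaklyChainedDiagDominant (lapB W δ) where
  sum_norm_le i := by linarith [sum_erase_norm_lapB_add hW hδ i, hδ i]
  exists_chain i := by
    obtain ⟨k, hik, hk⟩ := hreach i
    refine ⟨k, hik.lift' id fun a b hab => ?_, by linarith [sum_erase_norm_lapB_add hW hδ k]⟩
    rcases eq_or_ne a b with rfl | hne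
    · exact .refl
    · exact .single (by simpa [lapB_apply_of_ne hne] using hab.ne')

theorem reflTransGen_What_inr {i k : Fin n}
    (hik : Relation.ReflTransGen (fun a b => 0 < W a b) i k) (hk : 0 < δ k) :
    Relation.ReflTransGen (fun p q => 0 < What W δ p q) (Sum.inl i) (Sum.inr 0) :=
  (Relation.ReflTransGen.lift (p := fun p q => 0 < What W δ p q) Sum.inl (fun _ _ hab => hab)
    _ _ hik).tail hk

theorem charpoly_map_Lhat (W : Matrix (Fin n) (Fin n) ℝ) (δ : Fin n → ℝ) :
    ((Lhat W δ).map (algebraMap ℝ ℂ)).charpoly =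
      ((lapB W δ).map (algebraMap ℝ ℂ)).charpoly * X := by
  simp [Lhat, Matrix.fromBlocks_map, Matrix.map_zero, Matrix.charpoly_fromBlocks_zero₂₁]

theorem isEigOf_Lhat_iff {μ : ℂ} : IsEigOf (Lhat W δ) μ ↔ IsEigOf (lapB W δ) μ ∨ μ = 0 := by
  rw [IsEigOf, charpoly_map_Lhat, root_mul, ← IsEigOf, IsRoot, eval_X]

theorem rootMultiplicity_zero_charpoly_Lhat (h : ¬IsEigOf (lapB W δ) 0) :
    rootMultiplicity (0 : ℂ) ((Lhat W δ).map (algebraMap ℝ ℂ)).charpoly = 1 := by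
  have hX := rootMultiplicity_mul_X_sub_C_pow (a := (0 : ℂ)) (n := 1)
    (Matrix.charpoly_monic ((lapB W δ).map (algebraMap ℝ ℂ))).ne_zero
  rwa [C_0, sub_zero, pow_one, ← charpoly_map_Lhat, rootMultiplicity_eq_zero h] at hX

end Laplacian

theorem augmented_laplacian_spectrum_general
    {n : ℕ} (W : Matrix (Fin n) (Fin n) ℝ)
    (hWnonneg : ∀ i j, 0 ≤ W i j)
    (δ : Fin n → ℝ) (hδnonneg : ∀ i, 0 ≤ δ i)
    (hreach : ∀ i, ∃ k, Relation.ReflTransGen (fun a b => 0 < W a b) i k ∧ 0 < δ k) :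
    (∀ μ : ℂ, IsEigOf (lapB W δ) μ → IsEigOf (Lhat W δ) μ) ∧
    (∀ a : Fin n ⊕ Fin 1,
      Relation.ReflTransGen (fun p q => 0 < What W δ p q) a (Sum.inr 0)) ∧
    IsEigOf (Lhat W δ) 0 ∧
    Polynomial.rootMultiplicity (0 : ℂ)
      (((Lhat W δ).map (algebraMap ℝ ℂ)).charpoly) = 1 ∧
    (∀ μ : ℂ, IsEigOf (Lhat W δ) μ → μ ≠ 0 → 0 < μ.re) ∧
    (∀ μ : ℂ, IsEigOf (lapB W δ) μ → 0 < μ.re) := by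
  have hpos (μ : ℂ) (hμ : IsEigOf (lapB W δ) μ) : 0 < μ.re :=
    (weaklyChainedDiagDominant_lapB hWnonneg hδnonneg hreach).re_pos_of_isEigOf
      (lapB_apply_self_nonneg hWnonneg hδnonneg) hμ
  refine ⟨fun μ hμ => isEigOf_Lhat_iff.mpr (.inl hμ), ?_, isEigOf_Lhat_iff.mpr (.inr rfl),
    rootMultiplicity_zero_charpoly_Lhat fun h => (hpos 0 h).ne rfl,
    fun μ hμ hμ_ne => hpos μ ((isEigOf_Lhat_iff.mp hμ).resolve_right hμ_ne), hpos⟩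
  rintro (i | u)
  · obtain ⟨k, hik, hk⟩ := hreach i
    exact reflTransGen_What_inr hik hk
  · rw [Subsingleton.elim u 0]

/-- Every eigenvalue of `L_B` is an eigenvalue of the augmented
Laplacian `L̂`; the augmented graph `Ĝ` has a directed spanning tree rooted at the input
node `u`, `L̂` has a simple zero eigenvalue, all of its other eigenvalues have positive
real part, so every eigenvalue of `L_B` has positive real part. -/
theorem augmented_laplacian_spectrum
    {n : ℕ} (W : Matrix (Fin n) (Fin n) ℝ)
    (hWnonneg : ∀ i j, 0 ≤ W i j)
    (hconn : StronglyConnected W)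
    (δ : Fin n → ℝ) (hδnonneg : ∀ i, 0 ≤ δ i) (hδne : δ ≠ 0) :
    (∀ μ : ℂ, IsEigOf (lapB W δ) μ → IsEigOf (Lhat W δ) μ) ∧
    (∀ a : Fin n ⊕ Fin 1,
      Relation.ReflTransGen (fun p q => 0 < What W δ p q) a (Sum.inr 0)) ∧
    IsEigOf (Lhat W δ) 0 ∧
    Polynomial.rootMultiplicity (0 : ℂ)
      (((Lhat W δ).map (algebraMap ℝ ℂ)).charpoly) = 1 ∧
    (∀ μ : ℂ, IsEigOf (Lhat W δ) μ → μ ≠ 0 → 0 < μ.re) ∧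
    (∀ μ : ℂ, IsEigOf (lapB W δ) μ → 0 < μ.re) := by
  obtain ⟨k, hk⟩ := (Pi.lt_def.mp (lt_of_le_of_ne hδnonneg hδne.symm)).2
  exact augmented_laplacian_spectrum_general W hWnonneg δ hδnonneg fun i => ⟨k, hconn i k, hk⟩
end
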